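/- Let (M,E,V) be a path geometry, ξ₀ ∈ Γ(E) a scale, f ∈ C^∞(M), ξ̂₀ := e^f ξ₀, and let ∇, ∇̂ be the Weyl connections associated to ξ₀ and ξ̂₀. Then for any ψ ∈ 𝔛(M), ξ ∈ Γ(E), η₁,η₂ ∈ Γ(V), ξ₁ ∈ Γ(E), and ζ₁ := ι(𝓛(ξ₁,η₁)): (a) ∇̂_ψ ξ = ∇_ψ ξ − df(ψ) ξ; (b) ∇̂_ξ η₂ = ∇_ξ η₂ + ½ df(ξ) η₂; (c) ∇̂_{η₁} η₂ = ∇_{η₁} η₂ + df(η₁) η₂ + df(η₂) η₁; (d) ∇̂_{ζ₁} η₂ = ∇_{ζ₁} η₂ + ½ df(ξ₁) df(η₁) η₂ + df(ξ₁) df(η₂) η₁ − d^Q f(𝓛(ξ₁,η₂)) η₁. -/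

import Mathlib

/-!
A Weyl structure is determined by its scale because each of its axioms computes one piece of
`∇` from the Lie bracket, modulo terms that the injectivity of `𝓛(ξ₀, ·)` on `V`
(`IsScale.levi_inj`) allows one to compare. Write `a = df(ξ₀)`, `bᵢ = df(ηᵢ)`,
`ζᵢ = ι(𝓛(ξ₀,ηᵢ))`, `ζ̂ᵢ = ι̂(𝓛(ξ₀,ηᵢ))`.

* `∇̂(e^f ξ₀) = 0` gives `∇̂_ψ ξ₀ = -df(ψ) ξ₀` (`cov_scale`), which is (a).
* `τ(E,V) ⊂ ι(Q)` gives `ζᵢ = [ξ₀,ηᵢ] - ∇_{ξ₀}ηᵢ + ∇_{ηᵢ}ξ₀` (`ι_levi`), so the change of `ι`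
  is expressed by the change of `∇_{ξ₀}` on `V`.
* `τ(H,ι(Q)) ⊂ H` and parallelism of `ι ∘ 𝓛` give
  `𝓛(∇_ψ ξ₀, η) + 𝓛(ξ₀, ∇_ψ η) = q([ψ, ι(𝓛(ξ₀,η))])` for `ψ ∈ H` (`levi_cov`).
  With `ψ = ξ₀` the change of `∇_{ξ₀}` enters both sides, whence the factor `½` in (b)
  (`cov_E_change`) and `ζ̂ᵢ = ζᵢ - ½ a ηᵢ - bᵢ ξ₀` (`ι_levi_change`); with `ψ ∈ V` one gets (c)
  (`cov_V_change`).
* For (d) the two torsions in the normalization are compared: modulo `V`,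
  `τ̂(ξ₀,ζ̂₁) - τ(ξ₀,ζ₁)` is a multiple of `ξ₀` (`torsion_E_change`), and modulo `E`,
  `τ̂(η₁,ζ̂₂) - τ(η₁,ζ₂)` is `∇_{ζ₂}η₁ - ∇̂_{ζ₂}η₁` plus first order terms
  (`torsion_V_change`). The second derivatives `η₁(ξ₀(f))` cancel in the normalization, and
  what remains is (d) (`cov_Q_change`).

General `ξ ∈ E` are multiples of `ξ₀`, and all four formulas are tensorial in `ξ`.
-/

/-!
An algebraic model of the smooth calculus on a smooth manifold `M`:
`C` plays the role of the algebra `C^∞(M,ℝ)` of smooth functions and `X` plays the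
role of the `C^∞(M,ℝ)`-module `𝔛(M)` of smooth vector fields, together with the Lie
bracket of vector fields and the derivative of functions along vector fields
(i.e. a Lie–Rinehart algebra over `ℝ`).  Distributions (smooth subbundles of `TM`)
are modelled as `C`-submodules of `X`, linear connections on `TM` as operators
`X → X → X` with the usual tensoriality and Leibniz properties, and one-forms as
`C`-linear maps `X →ₗ[C] C`.
-/

open scoped TensorProduct

/-- The algebra of smooth functions together with the module of smooth vector
fields on a smooth manifold, with the Lie bracket and directional derivative. -/
structure VFCalc where
  /-- the smooth functions `C^∞(M,ℝ)` -/
  C : Type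
  /-- the smooth vector fields `𝔛(M)` -/
  X : Type
  [ringC : CommRing C]
  [algC : Algebra ℝ C]
  [grpX : AddCommGroup X]
  [modX : Module C X]
  /-- the Lie bracket of vector fields -/
  lie : X → X → X
  /-- the derivative `D ψ f = ψ · f` of a function along a vector field -/
  D : X → C → C
  lie_add_left : ∀ ψ₁ ψ₂ φ, lie (ψ₁ + ψ₂) φ = lie ψ₁ φ + lie ψ₂ φ
  lie_skew : ∀ ψ φ, lie φ ψ = - lie ψ φ
  jacobi : ∀ ψ₁ ψ₂ ψ₃, lie ψ₁ (lie ψ₂ ψ₃) = lie (lie ψ₁ ψ₂) ψ₃ + lie ψ₂ (lie ψ₁ ψ₃)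
  lie_smul_right : ∀ (f : C) (ψ φ : X), lie ψ (f • φ) = f • lie ψ φ + (D ψ f) • φ
  D_add_left : ∀ ψ₁ ψ₂ f, D (ψ₁ + ψ₂) f = D ψ₁ f + D ψ₂ f
  D_smul_left : ∀ (g : C) ψ f, D (g • ψ) f = g * D ψ f
  D_add_right : ∀ ψ f₁ f₂, D ψ (f₁ + f₂) = D ψ f₁ + D ψ f₂
  D_mul_right : ∀ ψ f₁ f₂, D ψ (f₁ * f₂) = f₁ * D ψ f₂ + f₂ * D ψ f₁
  D_algebraMap : ∀ ψ r, D ψ (algebraMap ℝ C r) = 0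

attribute [instance] VFCalc.ringC VFCalc.algC VFCalc.grpX VFCalc.modX

/-- the exterior derivative of a one-form, `dα(ψ,φ) = ψ·α(φ) − φ·α(ψ) − α([ψ,φ])` -/
def VFCalc.dform (P : VFCalc) (α : P.X →ₗ[P.C] P.C) (ψ φ : P.X) : P.C :=
  P.D ψ (α φ) - P.D φ (α ψ) - α (P.lie ψ φ)

/-- A (generalized) path geometry on a manifold `M` of dimension `2n+1`:
distributions `E, V ⊂ TM` (of rank `1` and `n`) with `E ∩ V = 0`, `V` involutive,
such that the Levi bracket induces an isomorphism `E ⊗ V ≅ Q := TM/(E ⊕ V)`. -/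
structure PathGeometry extends VFCalc where
  /-- the rank one distribution `E` -/
  E : Submodule C X
  /-- the rank `n` distribution `V` -/
  V : Submodule C X
  inf_bot : E ⊓ V = ⊥
  involutive : ∀ η₁ ∈ V, ∀ η₂ ∈ V, lie η₁ η₂ ∈ V
  /-- the Levi bracket `E ⊗ V → Q = TM/(E ⊔ V)` is an isomorphism of bundles -/
  leviIso : (↥E ⊗[C] ↥V) ≃ₗ[C] (X ⧸ (E ⊔ V))
  leviIso_apply : ∀ (ξ : ↥E) (η : ↥V),
    leviIso (ξ ⊗ₜ[C] η) = Submodule.Quotient.mk (lie (ξ : X) (η : X))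

namespace PathGeometry

variable (P : PathGeometry)

/-- the corank one distribution `H = E ⊕ V` -/
def H : Submodule P.C P.X := P.E ⊔ P.V

/-- the quotient bundle `Q = TM/H` -/
abbrev Q := P.X ⧸ P.H

/-- the quotient projection `q : TM → Q` -/
def q : P.X →ₗ[P.C] P.Q := P.H.mkQ

/-- the Levi bracket `𝓛(ψ,φ) = q([ψ,φ])` -/
def levi (ψ φ : P.X) : P.Q := P.q (P.lie ψ φ)

/-- the constant function `½` -/
noncomputable def half : P.C := algebraMap ℝ P.C (1/2)

/-- A (local) scale: a nowhere vanishing smooth section `ξ₀` of the line bundle `E`,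
i.e. a trivialization of `E`, modelled as a basis of `E` as free rank one module. -/
structure IsScale (ξ₀ : P.X) : Prop where
  mem : ξ₀ ∈ P.E
  span : ∀ ξ ∈ P.E, ∃ f : P.C, ξ = f • ξ₀
  basis : ∀ f : P.C, f • ξ₀ = 0 → f = 0

end PathGeometry

/-- A linear connection on `TM`. -/
structure Conn (P : VFCalc) where
  /-- the covariant derivative `cov ψ φ = ∇_ψ φ` -/
  cov : P.X → P.X → P.X
  add_left : ∀ ψ₁ ψ₂ φ, cov (ψ₁ + ψ₂) φ = cov ψ₁ φ + cov ψ₂ φ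
  smul_left : ∀ (f : P.C) ψ φ, cov (f • ψ) φ = f • cov ψ φ
  add_right : ∀ ψ φ₁ φ₂, cov ψ (φ₁ + φ₂) = cov ψ φ₁ + cov ψ φ₂
  leibniz : ∀ (f : P.C) ψ φ, cov ψ (f • φ) = f • cov ψ φ + (P.D ψ f) • φ

namespace Conn

variable {P : VFCalc} (cn : Conn P)

/-- the torsion `τ(ψ₁,ψ₂) = ∇_{ψ₁}ψ₂ − ∇_{ψ₂}ψ₁ − [ψ₁,ψ₂]` -/
def torsion (ψ₁ ψ₂ : P.X) : P.X := cn.cov ψ₁ ψ₂ - cn.cov ψ₂ ψ₁ - P.lie ψ₁ ψ₂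

/-- the curvature `R(ψ₁,ψ₂)(ψ₃) = ∇_{ψ₁}∇_{ψ₂}ψ₃ − ∇_{ψ₂}∇_{ψ₁}ψ₃ − ∇_{[ψ₁,ψ₂]}ψ₃` -/
def curv (ψ₁ ψ₂ ψ₃ : P.X) : P.X :=
  cn.cov ψ₁ (cn.cov ψ₂ ψ₃) - cn.cov ψ₂ (cn.cov ψ₁ ψ₃) - cn.cov (P.lie ψ₁ ψ₂) ψ₃

end Conn

/-- The Weyl structure associated to a scale `ξ₀`: a linear connection `∇` on `TM`
together with a decomposition `TM = E ⊕ V ⊕ ι(Q)` (encoded by the splitting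
`ι : Q → TM` of `q`) such that `E`, `V`, `ι(Q)` are parallel, `∇ξ₀ = 0`,
`ι ∘ 𝓛 : E ⊗ V → ι(Q)` is parallel, the torsion satisfies `τ(E,V) ⊂ ι(Q)`,
`τ(H,ι(Q)) ⊂ H` and the normalization
`𝓛(τ(ξ₀,ζ₁),η₂) = 2𝓛(ξ₀,τ(η₁,ζ₂))` for `ζᵢ = ι(𝓛(ξ₀,ηᵢ))`. -/
structure WeylStructure (P : PathGeometry) (ξ₀ : P.X) where
  conn : Conn P.toVFCalc
  ι : P.Q →ₗ[P.C] P.X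
  q_ι : ∀ w, P.q (ι w) = w
  parE : ∀ ψ : P.X, ∀ ξ ∈ P.E, conn.cov ψ ξ ∈ P.E
  parV : ∀ ψ : P.X, ∀ η ∈ P.V, conn.cov ψ η ∈ P.V
  parQ : ∀ (ψ : P.X) (w : P.Q), conn.cov ψ (ι w) ∈ LinearMap.range ι
  parScale : ∀ ψ : P.X, conn.cov ψ ξ₀ = 0
  parLevi : ∀ ψ : P.X, ∀ ξ ∈ P.E, ∀ η ∈ P.V,
    conn.cov ψ (ι (P.levi ξ η)) = ι (P.levi (conn.cov ψ ξ) η) + ι (P.levi ξ (conn.cov ψ η))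
  torsEV : ∀ ξ ∈ P.E, ∀ η ∈ P.V, conn.torsion ξ η ∈ LinearMap.range ι
  torsHQ : ∀ ψ ∈ P.H, ∀ w : P.Q, conn.torsion ψ (ι w) ∈ P.H
  norm : ∀ η₁ ∈ P.V, ∀ η₂ ∈ P.V,
    P.levi (conn.torsion ξ₀ (ι (P.levi ξ₀ η₁))) η₂
      = (2 : P.C) • P.levi ξ₀ (conn.torsion η₁ (ι (P.levi ξ₀ η₂)))

/-! ### Brackets in a path geometry -/

namespace PathGeometry

variable (P : PathGeometry)

lemma lie_add_right (ψ φ₁ φ₂ : P.X) :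
    P.lie ψ (φ₁ + φ₂) = P.lie ψ φ₁ + P.lie ψ φ₂ := by
  rw [P.lie_skew, P.lie_add_left, P.lie_skew ψ φ₁, P.lie_skew ψ φ₂]
  abel

lemma lie_sub_right (ψ φ₁ φ₂ : P.X) :
    P.lie ψ (φ₁ - φ₂) = P.lie ψ φ₁ - P.lie ψ φ₂ := by
  rw [eq_sub_iff_add_eq, ← lie_add_right, sub_add_cancel]

lemma D_sub_left (ψ₁ ψ₂ : P.X) (f : P.C) :
    P.D (ψ₁ - ψ₂) f = P.D ψ₁ f - P.D ψ₂ f := by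
  rw [eq_sub_iff_add_eq, ← P.D_add_left, sub_add_cancel]

lemma lie_smul_left (g : P.C) (ψ φ : P.X) :
    P.lie (g • ψ) φ = g • P.lie ψ φ - (P.D φ g) • ψ := by
  rw [P.lie_skew, P.lie_smul_right, P.lie_skew ψ φ]
  module

lemma q_eq_zero {x : P.X} (hx : x ∈ P.H) : P.q x = 0 :=
  (Submodule.Quotient.mk_eq_zero P.H).2 hx

lemma mem_H_of_E {x : P.X} (hx : x ∈ P.E) : x ∈ P.H :=
  (le_sup_left : P.E ≤ P.E ⊔ P.V) hx

lemma mem_H_of_V {x : P.X} (hx : x ∈ P.V) : x ∈ P.H :=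
  (le_sup_right : P.V ≤ P.E ⊔ P.V) hx

lemma levi_add_left (x y z : P.X) : P.levi (x + y) z = P.levi x z + P.levi y z := by
  simp only [levi, P.lie_add_left, map_add]

lemma levi_add_right (x y z : P.X) : P.levi x (y + z) = P.levi x y + P.levi x z := by
  simp only [levi, P.lie_add_right, map_add]

lemma levi_smul_left (g : P.C) {x : P.X} (hx : x ∈ P.H) (y : P.X) :
    P.levi (g • x) y = g • P.levi x y := by
  simp only [levi, P.lie_smul_left, map_sub, map_smul, P.q_eq_zero hx, smul_zero, sub_zero]

lemma levi_smul_right (g : P.C) (x : P.X) {y : P.X} (hy : y ∈ P.H) :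
    P.levi x (g • y) = g • P.levi x y := by
  simp only [levi, P.lie_smul_right, map_add, map_smul, P.q_eq_zero hy, smul_zero, add_zero]

lemma levi_sub_right (x y z : P.X) : P.levi x (y - z) = P.levi x y - P.levi x z := by
  rw [eq_sub_iff_add_eq, ← levi_add_right, sub_add_cancel]

lemma levi_zero_left (x : P.X) : P.levi 0 x = 0 := by
  rw [← zero_smul P.C (0 : P.X), P.levi_smul_left 0 P.H.zero_mem, zero_smul]

lemma levi_skew (x y : P.X) : P.levi x y = - P.levi y x := by
  simp only [levi, P.lie_skew y x, map_neg]

lemma levi_VV {x y : P.X} (hx : x ∈ P.V) (hy : y ∈ P.V) : P.levi x y = 0 :=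
  P.q_eq_zero (P.mem_H_of_V (P.involutive x hx y hy))

variable {P}

lemma half_mul_two : P.half * 2 = 1 := by
  have : (2 : P.C) = algebraMap ℝ P.C 2 := (map_ofNat _ 2).symm
  rw [half, this, ← map_mul]; norm_num

lemma two_smul_cancel {x y : P.X} (h : (2 : P.C) • x = (2 : P.C) • y) : x = y := by
  rw [← one_smul P.C x, ← one_smul P.C y, ← half_mul_two, mul_smul, mul_smul, h]

lemma lie_self (x : P.X) : P.lie x x = 0 := by
  apply two_smul_cancel
  have h := P.lie_skew x x
  linear_combination (norm := module) h

namespace IsScale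

variable {ξ₀ : P.X}

/-- `E` has rank one, so the brackets of `E` with itself stay in `E`. -/
lemma levi_EE (hξ₀ : P.IsScale ξ₀) {x : P.X} (hx : x ∈ P.E) : P.levi ξ₀ x = 0 := by
  obtain ⟨g, rfl⟩ := hξ₀.span x hx
  rw [P.levi_smul_right g ξ₀ (P.mem_H_of_E hξ₀.mem), levi, P.lie_self, map_zero, smul_zero]

/-- The anchor is a Lie algebra homomorphism. This is not an axiom of `VFCalc`, but the
Jacobi identity for `ψ`, `φ`, `f • ξ₀` gives it after multiplication by `ξ₀`, which has
trivial annihilator. -/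
lemma D_lie (hξ₀ : P.IsScale ξ₀) (ψ φ : P.X) (f : P.C) :
    P.D (P.lie ψ φ) f = P.D ψ (P.D φ f) - P.D φ (P.D ψ f) := by
  have h := P.jacobi ψ φ (f • ξ₀)
  simp only [P.lie_smul_right, P.lie_add_right] at h
  have k := P.jacobi ψ φ ξ₀
  rw [← sub_eq_zero]
  apply hξ₀.basis
  linear_combination (norm := module) f • k - h

/-- As `E` is free on `ξ₀`, the isomorphism `E ⊗ V ≅ Q` restricts to an injection
`𝓛(ξ₀, ·)` on `V`. -/
lemma levi_inj (hξ₀ : P.IsScale ξ₀) {x y : P.X} (hx : x ∈ P.V) (hy : y ∈ P.V)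
    (h : P.levi ξ₀ x = P.levi ξ₀ y) : x = y := by
  have h1 : P.leviIso (⟨ξ₀, hξ₀.mem⟩ ⊗ₜ[P.C] ⟨x, hx⟩)
      = P.leviIso (⟨ξ₀, hξ₀.mem⟩ ⊗ₜ[P.C] ⟨y, hy⟩) := by
    rw [P.leviIso_apply, P.leviIso_apply]; exact h
  have h2 := P.leviIso.injective h1
  let e₀ : P.C →ₗ[P.C] P.E := LinearMap.toSpanSingleton P.C P.E ⟨ξ₀, hξ₀.mem⟩
  have he₀ : ∀ c : P.C, ((e₀ c : P.E) : P.X) = c • ξ₀ := fun c => rfl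
  have hbij : Function.Bijective e₀ := by
    constructor
    · rw [injective_iff_map_eq_zero]
      intro c hc
      apply hξ₀.basis
      rw [← he₀, hc]; rfl
    · rintro ⟨z, hz⟩
      obtain ⟨g, hg⟩ := hξ₀.span z hz
      exact ⟨g, Subtype.ext hg.symm⟩
  let e := LinearEquiv.ofBijective e₀ hbij
  have he : e.symm ⟨ξ₀, hξ₀.mem⟩ = 1 := by
    rw [LinearEquiv.symm_apply_eq]
    exact Subtype.ext (one_smul P.C ξ₀).symm
  have h3 := congrArg
    (fun t => TensorProduct.lid P.C P.V (LinearMap.rTensor P.V e.symm.toLinearMap t)) h2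
  simp [he] at h3
  exact h3

end IsScale

end PathGeometry

/-! ### Consequences of the axioms of a single Weyl structure -/

namespace Conn

variable {P : VFCalc} (cn : Conn P)

lemma sub_left (x y z : P.X) : cn.cov (x - y) z = cn.cov x z - cn.cov y z := by
  rw [eq_sub_iff_add_eq, ← cn.add_left, sub_add_cancel]

lemma torsion_smul_right (g : P.C) (x y : P.X) :
    cn.torsion x (g • y) = g • cn.torsion x y := by
  simp only [torsion, cn.leibniz, cn.smul_left, P.lie_smul_right]
  module

lemma torsion_skew (x y : P.X) : cn.torsion x y = - cn.torsion y x := by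
  simp only [torsion, P.lie_skew y x]
  abel

lemma torsion_smul_left (g : P.C) (x y : P.X) :
    cn.torsion (g • x) y = g • cn.torsion x y := by
  rw [torsion_skew, torsion_smul_right, torsion_skew cn x y, smul_neg]

end Conn

namespace WeylStructure

variable {P : PathGeometry} {σ : P.X} (W : WeylStructure P σ)

lemma parH (ψ : P.X) {x : P.X} (hx : x ∈ P.H) : W.conn.cov ψ x ∈ P.H := by
  obtain ⟨e, he, v, hv, rfl⟩ := Submodule.mem_sup.1 hx
  rw [W.conn.add_right]
  exact P.H.add_mem (P.mem_H_of_E (W.parE ψ e he)) (P.mem_H_of_V (W.parV ψ v hv))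

/-- The splitting `ι` in terms of the partial connection `∇ : Γ(E) × Γ(V) → Γ(V)`. -/
lemma ι_levi {ξ η : P.X} (hξ : ξ ∈ P.E) (hη : η ∈ P.V) :
    W.ι (P.levi ξ η) = P.lie ξ η - W.conn.cov ξ η + W.conn.cov η ξ := by
  obtain ⟨w, hw⟩ := W.torsEV ξ hξ η hη
  have h1 : w = - P.levi ξ η := by
    rw [← W.q_ι w, hw, Conn.torsion, map_sub, map_sub,
      P.q_eq_zero (P.mem_H_of_V (W.parV ξ η hη)), P.q_eq_zero (P.mem_H_of_E (W.parE η ξ hξ)),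
      PathGeometry.levi]
    abel
  rw [h1, map_neg, Conn.torsion] at hw
  linear_combination (norm := module) -hw

/-- Parallelism of `ι ∘ 𝓛` and `τ(H, ι(Q)) ⊂ H` express `∇` along `H` by the bracket. -/
lemma levi_cov {ψ ξ η : P.X} (hψ : ψ ∈ P.H) (hξ : ξ ∈ P.E) (hη : η ∈ P.V) :
    P.levi (W.conn.cov ψ ξ) η + P.levi ξ (W.conn.cov ψ η)
      = P.q (P.lie ψ (W.ι (P.levi ξ η))) := by
  have h := P.q_eq_zero (W.torsHQ ψ hψ (P.levi ξ η))
  rw [Conn.torsion, W.parLevi ψ ξ hξ η hη, map_sub, map_sub, map_add, W.q_ι, W.q_ι,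
    P.q_eq_zero (W.parH _ hψ), sub_zero, sub_eq_zero] at h
  exact h

end WeylStructure

/-! ### Comparison of two Weyl structures -/

namespace WeylStructure

variable {P : PathGeometry} {ξ₀ : P.X} {u f : P.C}

/-- Formula (a) for `ξ = ξ₀`. -/
lemma cov_scale (hu : IsUnit u) (hDu : ∀ ψ : P.X, P.D ψ u = u * P.D ψ f)
    (W' : WeylStructure P (u • ξ₀)) (ψ : P.X) :
    W'.conn.cov ψ ξ₀ = -(P.D ψ f) • ξ₀ := by
  have h := W'.parScale ψ
  rw [W'.conn.leibniz, hDu] at h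
  apply hu.smul_left_cancel.1
  linear_combination (norm := module) h

lemma ι_levi_scale (hξ₀ : P.IsScale ξ₀) (W : WeylStructure P ξ₀) {η : P.X} (hη : η ∈ P.V) :
    W.ι (P.levi ξ₀ η) = P.lie ξ₀ η - W.conn.cov ξ₀ η := by
  rw [W.ι_levi hξ₀.mem hη, W.parScale, add_zero]

/-- `∇` is torsion free along the leaves of `V`. This is the Jacobi identity for `ξ₀` and two
sections of `V`, read modulo `H`. -/
lemma cov_VV_sub (hξ₀ : P.IsScale ξ₀) (W : WeylStructure P ξ₀) {η₁ η₂ : P.X}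
    (h₁ : η₁ ∈ P.V) (h₂ : η₂ ∈ P.V) :
    W.conn.cov η₁ η₂ - W.conn.cov η₂ η₁ = P.lie η₁ η₂ := by
  apply hξ₀.levi_inj (P.V.sub_mem (W.parV _ _ h₂) (W.parV _ _ h₁)) (P.involutive _ h₁ _ h₂)
  have key : ∀ x ∈ P.V, ∀ y ∈ P.V,
      P.levi ξ₀ (W.conn.cov x y) = P.q (P.lie x (P.lie ξ₀ y)) := by
    intro x hx y hy
    have h := W.levi_cov (P.mem_H_of_V hx) hξ₀.mem hy
    rw [W.parScale, P.levi_zero_left, zero_add] at h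
    rw [h, W.ι_levi_scale hξ₀ hy]
    change P.levi x (_ - _) = P.levi x _
    rw [P.levi_sub_right, P.levi_VV hx (W.parV _ _ hy), sub_zero]
  rw [P.levi_sub_right, key _ h₁ _ h₂, key _ h₂ _ h₁, PathGeometry.levi, P.jacobi ξ₀ η₁ η₂,
    P.lie_skew η₂ (P.lie ξ₀ η₁), map_add, map_neg]
  abel

lemma ι_levi_change_aux (hξ₀ : P.IsScale ξ₀) (hu : IsUnit u)
    (hDu : ∀ ψ : P.X, P.D ψ u = u * P.D ψ f)
    (W : WeylStructure P ξ₀) (W' : WeylStructure P (u • ξ₀))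
    {η : P.X} (hη : η ∈ P.V) :
    W'.ι (P.levi ξ₀ η) = W.ι (P.levi ξ₀ η) + (W.conn.cov ξ₀ η - W'.conn.cov ξ₀ η)
      - (P.D η f) • ξ₀ := by
  rw [W.ι_levi_scale hξ₀ hη, W'.ι_levi hξ₀.mem hη, cov_scale hu hDu]
  module

/-- Formula (b) for `ξ = ξ₀`. -/
lemma cov_E_change (hξ₀ : P.IsScale ξ₀) (hu : IsUnit u)
    (hDu : ∀ ψ : P.X, P.D ψ u = u * P.D ψ f)
    (W : WeylStructure P ξ₀) (W' : WeylStructure P (u • ξ₀))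
    {η : P.X} (hη : η ∈ P.V) :
    W'.conn.cov ξ₀ η = W.conn.cov ξ₀ η + (P.half * P.D ξ₀ f) • η := by
  have hE := P.mem_H_of_E hξ₀.mem
  have h := W.levi_cov hE hξ₀.mem hη
  have k := W'.levi_cov hE hξ₀.mem hη
  rw [W.parScale, P.levi_zero_left, zero_add] at h
  rw [cov_scale hu hDu, ι_levi_change_aux hξ₀ hu hDu W W' hη] at k
  change _ = P.levi _ _ at h k
  rw [P.levi_smul_left _ hE, P.levi_sub_right, P.levi_add_right, P.levi_sub_right,
    hξ₀.levi_EE (P.E.smul_mem _ hξ₀.mem)] at k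
  apply PathGeometry.two_smul_cancel
  have hv := W.parV ξ₀ η hη
  have hv' := W'.parV ξ₀ η hη
  have hr := P.V.add_mem hv (P.V.smul_mem (P.half * P.D ξ₀ f) hη)
  apply hξ₀.levi_inj (P.V.smul_mem _ hv') (P.V.smul_mem _ hr)
  rw [P.levi_smul_right _ _ (P.mem_H_of_V hv'), P.levi_smul_right _ _ (P.mem_H_of_V hr),
    P.levi_add_right, P.levi_smul_right _ _ (P.mem_H_of_V hη), smul_add, smul_smul,
    show 2 * (P.half * P.D ξ₀ f) = P.D ξ₀ f by
      linear_combination P.D ξ₀ f * P.half_mul_two]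
  linear_combination (norm := module) k - h

/-- The change of the splitting of `TM → Q`. -/
lemma ι_levi_change (hξ₀ : P.IsScale ξ₀) (hu : IsUnit u)
    (hDu : ∀ ψ : P.X, P.D ψ u = u * P.D ψ f)
    (W : WeylStructure P ξ₀) (W' : WeylStructure P (u • ξ₀))
    {η : P.X} (hη : η ∈ P.V) :
    W'.ι (P.levi ξ₀ η) = W.ι (P.levi ξ₀ η) - (P.half * P.D ξ₀ f) • η - (P.D η f) • ξ₀ := by
  rw [ι_levi_change_aux hξ₀ hu hDu W W' hη, cov_E_change hξ₀ hu hDu W W' hη]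
  module

/-- Formula (c). -/
lemma cov_V_change (hξ₀ : P.IsScale ξ₀) (hu : IsUnit u)
    (hDu : ∀ ψ : P.X, P.D ψ u = u * P.D ψ f)
    (W : WeylStructure P ξ₀) (W' : WeylStructure P (u • ξ₀))
    {η₁ η₂ : P.X} (h₁ : η₁ ∈ P.V) (h₂ : η₂ ∈ P.V) :
    W'.conn.cov η₁ η₂ = W.conn.cov η₁ η₂ + (P.D η₁ f) • η₂ + (P.D η₂ f) • η₁ := by
  have hE := P.mem_H_of_E hξ₀.mem
  have h := W.levi_cov (P.mem_H_of_V h₁) hξ₀.mem h₂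
  have k := W'.levi_cov (P.mem_H_of_V h₁) hξ₀.mem h₂
  rw [W.parScale, P.levi_zero_left, zero_add] at h
  rw [cov_scale hu hDu, ι_levi_change hξ₀ hu hDu W W' h₂] at k
  change _ = P.levi _ _ at h k
  rw [P.levi_smul_left _ hE, P.levi_sub_right, P.levi_sub_right,
    P.levi_VV h₁ (P.V.smul_mem _ h₂), P.levi_smul_right _ _ hE, P.levi_skew η₁ ξ₀] at k
  apply hξ₀.levi_inj (W'.parV _ _ h₂) (P.V.add_mem (P.V.add_mem (W.parV _ _ h₂)
    (P.V.smul_mem _ h₂)) (P.V.smul_mem _ h₁))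
  rw [P.levi_add_right, P.levi_add_right, P.levi_smul_right _ _ (P.mem_H_of_V h₂),
    P.levi_smul_right _ _ (P.mem_H_of_V h₁)]
  linear_combination (norm := module) k - h

/-- The normalization of `∇̂`, freed of the factor `e^f` in the scale. -/
lemma norm_scale (hξ₀ : P.IsScale ξ₀) (hu : IsUnit u) (W' : WeylStructure P (u • ξ₀))
    {η₁ η₂ : P.X} (h₁ : η₁ ∈ P.V) (h₂ : η₂ ∈ P.V) :
    P.levi (W'.conn.torsion ξ₀ (W'.ι (P.levi ξ₀ η₁))) η₂
      = (2 : P.C) • P.levi ξ₀ (W'.conn.torsion η₁ (W'.ι (P.levi ξ₀ η₂))) := by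
  have hE := P.mem_H_of_E hξ₀.mem
  have t₁ := W'.torsHQ ξ₀ hE (P.levi ξ₀ η₁)
  have h := W'.norm η₁ h₁ η₂ h₂
  rw [P.levi_smul_left _ hE, P.levi_smul_left _ hE, P.levi_smul_left _ hE, map_smul, map_smul,
    Conn.torsion_smul_left, Conn.torsion_smul_right, Conn.torsion_smul_right,
    P.levi_smul_left _ (P.H.smul_mem _ t₁), P.levi_smul_left _ t₁,
    P.levi_smul_right _ _ (W'.torsHQ η₁ (P.mem_H_of_V h₁) _)] at h
  apply hu.smul_left_cancel.1
  apply hu.smul_left_cancel.1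
  linear_combination (norm := module) h

/-- The component in `E` of the change of `τ(ξ₀, ζ₁)`. -/
lemma torsion_E_change (hξ₀ : P.IsScale ξ₀) (hu : IsUnit u)
    (hDu : ∀ ψ : P.X, P.D ψ u = u * P.D ψ f)
    (W : WeylStructure P ξ₀) (W' : WeylStructure P (u • ξ₀))
    {η : P.X} (hη : η ∈ P.V) :
    ∃ v ∈ P.V, W'.conn.torsion ξ₀ (W'.ι (P.levi ξ₀ η))
      = W.conn.torsion ξ₀ (W.ι (P.levi ξ₀ η))
        + (2 * P.D (W.ι (P.levi ξ₀ η)) f + P.D η (P.D ξ₀ f) - P.D ξ₀ f * P.D η f) • ξ₀ + v := by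
  have hE := P.mem_H_of_E hξ₀.mem
  have hlie : P.lie ξ₀ η = W.ι (P.levi ξ₀ η) + W.conn.cov ξ₀ η := by
    rw [W.ι_levi_scale hξ₀ hη]; abel
  have hD : P.D ξ₀ (P.D η f) - P.D (W.conn.cov ξ₀ η) f
      = P.D η (P.D ξ₀ f) + P.D (W.ι (P.levi ξ₀ η)) f := by
    have h := hξ₀.D_lie ξ₀ η f
    rw [hlie, P.D_add_left] at h
    linear_combination -h
  refine ⟨(P.D ξ₀ (P.half * P.D ξ₀ f)
    - (P.half * P.D ξ₀ f - P.D ξ₀ f) * (P.half * P.D ξ₀ f)) • η, P.V.smul_mem _ hη, ?_⟩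
  rw [Conn.torsion, W'.parLevi _ _ hξ₀.mem _ hη, Conn.torsion, W.parLevi _ _ hξ₀.mem _ hη,
    cov_scale hu hDu, cov_scale hu hDu, W.parScale, W.parScale, P.levi_zero_left,
    P.levi_smul_left _ hE, cov_E_change hξ₀ hu hDu W W' hη, P.levi_add_right,
    P.levi_smul_right _ _ (P.mem_H_of_V hη), map_add, map_smul, map_smul, map_zero,
    ι_levi_change hξ₀ hu hDu W W' hη, ι_levi_change hξ₀ hu hDu W W' (W.parV _ _ hη),
    P.lie_sub_right, P.lie_sub_right, P.lie_smul_right, P.lie_smul_right, P.lie_self, hlie,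
    P.D_sub_left, P.D_sub_left, P.D_smul_left, P.D_smul_left]
  linear_combination (norm := module) hD • ξ₀
    + (P.D ξ₀ f * P.half_mul_two) • W.ι (P.levi ξ₀ η)
    - (P.D ξ₀ f * P.D η f * P.half_mul_two) • ξ₀

/-- The component in `V` of the change of `τ(η₁, ζ₂)`. -/
lemma torsion_V_change (hξ₀ : P.IsScale ξ₀) (hu : IsUnit u)
    (hDu : ∀ ψ : P.X, P.D ψ u = u * P.D ψ f)
    (W : WeylStructure P ξ₀) (W' : WeylStructure P (u • ξ₀))
    {η₁ η₂ : P.X} (h₁ : η₁ ∈ P.V) (h₂ : η₂ ∈ P.V) :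
    ∃ e ∈ P.E, W'.conn.torsion η₁ (W'.ι (P.levi ξ₀ η₂))
      = W.conn.torsion η₁ (W.ι (P.levi ξ₀ η₂))
        + (W.conn.cov (W.ι (P.levi ξ₀ η₂)) η₁ - W'.conn.cov (W.ι (P.levi ξ₀ η₂)) η₁
          + (P.half * P.D ξ₀ f * P.D η₂ f) • η₁
          + (P.half * (P.D ξ₀ f * P.D η₁ f + P.D η₁ (P.D ξ₀ f))) • η₂) + e := by
  have hE := P.mem_H_of_E hξ₀.mem
  have hlie : P.lie η₁ ξ₀ = -(W.ι (P.levi ξ₀ η₁) + W.conn.cov ξ₀ η₁) := by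
    rw [P.lie_skew, W.ι_levi_scale hξ₀ h₁]; abel
  have hVV := cov_VV_sub hξ₀ W h₁ h₂
  have hhalf : P.D η₁ (P.half * P.D ξ₀ f) = P.half * P.D η₁ (P.D ξ₀ f) := by
    rw [P.D_mul_right, PathGeometry.half, P.D_algebraMap, mul_zero, add_zero]
  refine ⟨(P.D η₁ (P.D η₂ f) - P.D (W.conn.cov η₁ η₂) f - P.D η₂ f * P.D η₁ f) • ξ₀,
    P.E.smul_mem _ hξ₀.mem, ?_⟩
  rw [Conn.torsion, W'.parLevi _ _ hξ₀.mem _ h₂, Conn.torsion, W.parLevi _ _ hξ₀.mem _ h₂,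
    cov_scale hu hDu, W.parScale, P.levi_zero_left, P.levi_smul_left _ hE,
    cov_V_change hξ₀ hu hDu W W' h₁ h₂, P.levi_add_right, P.levi_add_right,
    P.levi_smul_right _ _ (P.mem_H_of_V h₁), P.levi_smul_right _ _ (P.mem_H_of_V h₂),
    map_add, map_add, map_smul, map_smul, map_smul, map_zero,
    ι_levi_change hξ₀ hu hDu W W' h₁, ι_levi_change hξ₀ hu hDu W W' h₂,
    ι_levi_change hξ₀ hu hDu W W' (W.parV _ _ h₂),
    Conn.sub_left, Conn.sub_left, Conn.smul_left, Conn.smul_left,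
    cov_E_change hξ₀ hu hDu W W' h₁, cov_V_change hξ₀ hu hDu W W' h₂ h₁,
    P.lie_sub_right, P.lie_sub_right, P.lie_smul_right, P.lie_smul_right, hlie, hhalf, ← hVV]
  module

/-- Formula (d) for `ξ₁ = ξ₀`. -/
lemma cov_Q_change (hξ₀ : P.IsScale ξ₀) (hu : IsUnit u)
    (hDu : ∀ ψ : P.X, P.D ψ u = u * P.D ψ f)
    (W : WeylStructure P ξ₀) (W' : WeylStructure P (u • ξ₀))
    {η₁ η₂ : P.X} (h₁ : η₁ ∈ P.V) (h₂ : η₂ ∈ P.V) :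
    W'.conn.cov (W.ι (P.levi ξ₀ η₁)) η₂ = W.conn.cov (W.ι (P.levi ξ₀ η₁)) η₂
      + (P.half * P.D ξ₀ f * P.D η₁ f) • η₂ + (P.D ξ₀ f * P.D η₂ f) • η₁
      - (P.D (W.ι (P.levi ξ₀ η₂)) f) • η₁ := by
  -- In the normalization `η₁` and `η₂` are interchanged: it is the torsion on its right-hand
  -- side that contains the derivative along `ζ₁`.
  obtain ⟨v, hv, hτE⟩ := torsion_E_change hξ₀ hu hDu W W' h₂
  obtain ⟨e, he, hτV⟩ := torsion_V_change hξ₀ hu hDu W W' h₂ h₁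
  have h := W.norm η₂ h₂ η₁ h₁
  have k := norm_scale hξ₀ hu W' h₂ h₁
  have hX := P.V.add_mem (P.V.add_mem (P.V.sub_mem (W.parV (W.ι (P.levi ξ₀ η₁)) η₂ h₂)
    (W'.parV (W.ι (P.levi ξ₀ η₁)) η₂ h₂))
    (P.V.smul_mem (P.half * P.D ξ₀ f * P.D η₁ f) h₂))
    (P.V.smul_mem (P.half * (P.D ξ₀ f * P.D η₂ f + P.D η₂ (P.D ξ₀ f))) h₁)
  rw [hτE, hτV, P.levi_add_left, P.levi_add_left, P.levi_VV hv h₁,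
    P.levi_smul_left _ (P.mem_H_of_E hξ₀.mem), P.levi_add_right, P.levi_add_right,
    hξ₀.levi_EE he, ← P.levi_smul_right _ _ (P.mem_H_of_V h₁)] at k
  have key := hξ₀.levi_inj (P.V.smul_mem _ h₁) (P.V.smul_mem (2 : P.C) hX) (by
    rw [P.levi_smul_right 2 _ (P.mem_H_of_V hX)]
    linear_combination (norm := module) k - h)
  apply PathGeometry.two_smul_cancel
  linear_combination (norm := module) key
    + ((P.D ξ₀ f * P.D η₂ f + P.D η₂ (P.D ξ₀ f)) * P.half_mul_two) • η₁

end WeylStructure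

/-- Proposition 4.1 (ii), formulas (4.3) and (4.4) of the paper.
Let `(M,E,V)` be a path geometry, `ξ₀ ∈ Γ(E)` a scale and `ξ̂₀ := e^f ξ₀` the rescaled
scale, where `e^f` is modelled as an invertible `u ∈ C` with `d(u) = u·df`.  Let `∇`
and `∇̂` be the Weyl connections associated to `ξ₀` and `ξ̂₀`.  Then for vector fields
`ψ`, sections `ξ, ξ₁ ∈ Γ(E)`, `η₁, η₂ ∈ Γ(V)` and `ζ₁ := ι(𝓛(ξ₁,η₁))`:
(a) `∇̂_ψ ξ = ∇_ψ ξ − df(ψ) ξ`;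
(b) `∇̂_ξ η₂ = ∇_ξ η₂ + ½ df(ξ) η₂`;
(c) `∇̂_{η₁} η₂ = ∇_{η₁} η₂ + df(η₁) η₂ + df(η₂) η₁`;
(d) `∇̂_{ζ₁} η₂ = ∇_{ζ₁} η₂ + ½ df(ξ₁) df(η₁) η₂ + df(ξ₁) df(η₂) η₁
      − d^Q f(𝓛(ξ₁,η₂)) η₁`, where `d^Q f(𝓛(ξ₁,η₂)) = df(ι(𝓛(ξ₁,η₂)))`. -/
theorem change_of_scale_connection (P : PathGeometry) (ξ₀ : P.X) (hξ₀ : P.IsScale ξ₀)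
    (u f : P.C) (hu : IsUnit u) (hDu : ∀ ψ : P.X, P.D ψ u = u * P.D ψ f)
    (W : WeylStructure P ξ₀) (W' : WeylStructure P (u • ξ₀)) :
    (∀ ψ : P.X, ∀ ξ ∈ P.E,
      W'.conn.cov ψ ξ = W.conn.cov ψ ξ - (P.D ψ f) • ξ) ∧
    (∀ ξ ∈ P.E, ∀ η₂ ∈ P.V,
      W'.conn.cov ξ η₂ = W.conn.cov ξ η₂ + (P.half * P.D ξ f) • η₂) ∧
    (∀ η₁ ∈ P.V, ∀ η₂ ∈ P.V,
      W'.conn.cov η₁ η₂ = W.conn.cov η₁ η₂ + (P.D η₁ f) • η₂ + (P.D η₂ f) • η₁) ∧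
    (∀ ξ₁ ∈ P.E, ∀ η₁ ∈ P.V, ∀ η₂ ∈ P.V,
      W'.conn.cov (W.ι (P.levi ξ₁ η₁)) η₂
        = W.conn.cov (W.ι (P.levi ξ₁ η₁)) η₂
          + (P.half * P.D ξ₁ f * P.D η₁ f) • η₂
          + (P.D ξ₁ f * P.D η₂ f) • η₁
          - (P.D (W.ι (P.levi ξ₁ η₂)) f) • η₁) := by
  have hE := P.mem_H_of_E hξ₀.mem
  refine ⟨fun ψ ξ hξ => ?_, fun ξ hξ η₂ h₂ => ?_, fun η₁ h₁ η₂ h₂ =>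
    WeylStructure.cov_V_change hξ₀ hu hDu W W' h₁ h₂, fun ξ₁ hξ₁ η₁ h₁ η₂ h₂ => ?_⟩
  · obtain ⟨g, rfl⟩ := hξ₀.span ξ hξ
    rw [W.conn.leibniz, W'.conn.leibniz, WeylStructure.cov_scale hu hDu, W.parScale]
    module
  · obtain ⟨g, rfl⟩ := hξ₀.span ξ hξ
    rw [W.conn.smul_left, W'.conn.smul_left, WeylStructure.cov_E_change hξ₀ hu hDu W W' h₂,
      P.D_smul_left]
    module
  · obtain ⟨g, rfl⟩ := hξ₀.span ξ₁ hξ₁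
    rw [P.levi_smul_left _ hE, P.levi_smul_left _ hE, map_smul, map_smul, W.conn.smul_left,
      W'.conn.smul_left, WeylStructure.cov_Q_change hξ₀ hu hDu W W' h₁ h₂,
      P.D_smul_left, P.D_smul_left]
    module
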